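/- Let m ≥ 2 and fix pairwise disjoint finite observed index sets V_1,…,V_m with union V. For r ∈ {1,2}, let (B^r, P^r) be a linear multi-domain representation over latent index data H^r = L^r ∪ I_1^r ∪ ⋯ ∪ I_m^r (with S_e^r = L^r ∪ I_e^r), i.e. B^r = G^r (I − A^r)^{-1} with G^r_{v,k} = 0 whenever v ∈ V_e and k ∉ S_e^r, I − A^r invertible, A^r_{L^r, H^r∖L^r} = 0, A^r_{H^r∖L^r, L^r} = 0, A^r_{I_e^r, I_f^r} = 0 for e ≠ f, and P^r = ⊗_{i∈H^r} P_i^r a product probability measure on ℝ^{H^r}. Assume for each r: every marginal P_i^r has mean zero and unit variance, is non-symmetric (P_i^r ≠ (−1)#P_i^r), and the marginals are pairwise different up to sign (P_i^r ≠ P_j^r and P_i^r ≠ (−1)#P_j^r for i ≠ j); assume moreover that for every domain e the matrix B^r_{V_e, S_e^r} has full column rank. If for every e ∈ {1,…,m} the domain-e marginals agree, i.e. B^1_{V_e,·}#P^1 = B^2_{V_e,·}#P^2 as measures on ℝ^{V_e}, then |L^1| = |L^2| and |I_e^1| = |I_e^2| for all e (hence |H^1| = |H^2|), and, after identifying the index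 sets block-wise in order, there exists a block signed permutation matrix Ψ = diag(Ψ_L, Ψ_{I_1}, …, Ψ_{I_m}), with Ψ_L a signed permutation of L and each Ψ_{I_e} a signed permutation of I_e, such that B^2 = B^1 Ψ and P^2 = Ψ^T # P^1; in particular the joint distributions coincide: B^1 # P^1 = B^2 # P^2. -/

import Mathlib

open MeasureTheory
open ProbabilityTheory Filter Asymptotics
open scoped Topology Matrix

/-!
Within a domain, equal laws have equal covariances, and since both mixing matrices have full column
rank the two source vectors differ by an orthogonal matrix `Q`. For a standardized law the odd part
of the characteristic function is `o(u²)`. Let `W` be the symmetric matrix with off-diagonal blocks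
`Q` and `Qᵀ`. On the rows of `W` without an entry `±1` the sizes `g` of these odd parts satisfy
`g s u ≤ ∑ t, g t (W s t * u)` with arguments shrunk by a uniform factor `c < 1`; as the rows are
unit vectors, iterating keeps the bound `g s u ≤ η * u ^ 2` valid for every `η > 0` at every `u`, so
`g = 0` and the laws of these rows are symmetric. Hence, for non-symmetric sources, `Q` is a signed
permutation.

As the sources are pairwise different up to sign, the law of a source determines its partner and the
sign, so the matchings found in the different domains are restrictions of a single one, which
preserves the set of domains seeing a source. With two or more domains this set determines the
block: a shared source is seen by all domains and a specific one by exactly one.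
-/

section OddPart

lemma norm_prod_sub_prod_le_sum {ι R : Type*} [NormedCommRing R] [NormOneClass R]
    (s : Finset ι) {a b : ι → R} (ha : ∀ i, ‖a i‖ ≤ 1) (hb : ∀ i, ‖b i‖ ≤ 1) :
    ‖∏ i ∈ s, a i - ∏ i ∈ s, b i‖ ≤ ∑ i ∈ s, ‖a i - b i‖ := by
  classical
  induction s using Finset.induction_on with
  | empty => simp
  | insert k s hk ih =>
    have hb' : ‖∏ i ∈ s, b i‖ ≤ 1 :=
      (s.norm_prod_le b).trans (Finset.prod_le_one (fun _ _ => norm_nonneg _) fun i _ => hb i)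
    rw [Finset.prod_insert hk, Finset.prod_insert hk, Finset.sum_insert hk]
    calc ‖a k * ∏ i ∈ s, a i - b k * ∏ i ∈ s, b i‖
        = ‖(a k - b k) * ∏ i ∈ s, b i + a k * (∏ i ∈ s, a i - ∏ i ∈ s, b i)‖ := by
          congr 1; ring
      _ ≤ ‖a k - b k‖ * ‖∏ i ∈ s, b i‖ + ‖a k‖ * ‖∏ i ∈ s, a i - ∏ i ∈ s, b i‖ :=
          (norm_add_le _ _).trans (add_le_add (norm_mul_le _ _) (norm_mul_le _ _))
      _ ≤ ‖a k - b k‖ + ∑ i ∈ s, ‖a i - b i‖ :=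
          add_le_add (mul_le_of_le_one_right (norm_nonneg _) hb')
            ((mul_le_of_le_one_left (norm_nonneg _) (ha k)).trans ih)

/-- A law with mean zero and unit variance; the variance is read off the second moment. -/
structure IsStandardized (μ : Measure ℝ) : Prop where
  integral_id : ∫ x, x ∂μ = 0
  integral_sq : ∫ x, x ^ 2 ∂μ = 1

/-- The size of the odd part of the characteristic function (up to a factor `2`), a measure of how
far a law is from being symmetric. -/
noncomputable def charFunAsymm (μ : Measure ℝ) (u : ℝ) : ℝ :=
  ‖charFun μ u - charFun μ (-u)‖

lemma IsStandardized.charFunAsymm_isLittleO {μ : Measure ℝ} [IsProbabilityMeasure μ]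
    (hμ : IsStandardized μ) : charFunAsymm μ =o[𝓝 0] fun u => u ^ 2 := by
  have hT := taylor_charFun_two (X := id) (P := μ) aemeasurable_id
    (by simpa using hμ.integral_id) (by simpa using hμ.integral_sq)
  rw [Measure.map_id] at hT
  have hneg : Tendsto (fun u : ℝ => -u) (𝓝 0) (𝓝 0) := by
    simpa using (continuous_neg (G := ℝ)).tendsto 0
  have hT_neg := (hT.comp_tendsto hneg).congr_right (g₂ := fun u : ℝ => u ^ 2) fun u => by simp
  refine ((hT.sub hT_neg).congr_left fun u => ?_).norm_left
  simp only [Function.comp_apply]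
  push_cast
  ring

lemma eq_map_neg_of_charFunAsymm_eq_zero {μ : Measure ℝ} [IsFiniteMeasure μ]
    (h : ∀ u, charFunAsymm μ u = 0) : μ = μ.map fun t => -t := by
  refine Measure.ext_of_charFun (funext fun u => ?_)
  have hneg := charFun_map_mul (μ := μ) (-1) u
  simp only [neg_one_mul] at hneg
  rw [hneg, ← sub_eq_zero, ← norm_eq_zero]
  exact h u

lemma charFunAsymm_le_sum {S : Type*} [Fintype S] {μ : Measure ℝ} {ν : S → Measure ℝ}
    [∀ t, IsProbabilityMeasure (ν t)] {w : S → ℝ}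
    (h : ∀ u, charFun μ u = ∏ t, charFun (ν t) (w t * u)) (u : ℝ) :
    charFunAsymm μ u ≤ ∑ t, charFunAsymm (ν t) (w t * u) := by
  simp only [charFunAsymm, h, ← mul_neg]
  exact norm_prod_sub_prod_le_sum _ (fun t => norm_charFun_le_one _) fun t => norm_charFun_le_one _

end OddPart

section Contraction

/-- Iterating the inequality multiplies the argument by factors at most `c`, which pushes every
point into the region where the quadratic bound is known. -/
lemma le_mul_sq_of_le_sum_comp_mul {S : Type*} [Fintype S] {p : S → Prop} {w : S → S → ℝ}
    {g : S → ℝ → ℝ} {c δ η : ℝ} (hc0 : 0 ≤ c) (hc1 : c < 1) (hδ : 0 < δ) (hη : 0 ≤ η)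
    (hclosed : ∀ s t, p s → w s t ≠ 0 → p t) (hw : ∀ s t, p s → |w s t| ≤ c)
    (hrow : ∀ s, ∑ t, w s t ^ 2 ≤ 1) (hnear : ∀ s u, |u| < δ → g s u ≤ η * u ^ 2)
    (hle : ∀ s u, g s u ≤ ∑ t, g t (w s t * u)) {s : S} (hs : p s) (u : ℝ) :
    g s u ≤ η * u ^ 2 := by
  have hiter : ∀ n s u, p s → c ^ n * |u| < δ → g s u ≤ η * u ^ 2 := by
    intro n
    induction n with
    | zero => exact fun s u _ hu => hnear s u (by simpa using hu)
    | succ n ih =>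
      intro s u hs hu
      have hterm : ∀ t, g t (w s t * u) ≤ η * (w s t * u) ^ 2 := fun t => by
        by_cases hst : w s t = 0
        · exact hnear t _ (by simpa [hst] using hδ)
        · refine ih t _ (hclosed s t hs hst) (lt_of_le_of_lt ?_ hu)
          rw [abs_mul, pow_succ, mul_assoc]
          gcongr
          exact hw s t hs
      calc g s u ≤ ∑ t, g t (w s t * u) := hle s u
        _ ≤ ∑ t, η * (w s t * u) ^ 2 := Finset.sum_le_sum fun t _ => hterm t
        _ = (∑ t, w s t ^ 2) * (η * u ^ 2) := by
          rw [Finset.sum_mul]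
          exact Finset.sum_congr rfl fun t _ => by ring
        _ ≤ η * u ^ 2 := mul_le_of_le_one_left (by positivity) (hrow s)
  have hlim : Tendsto (fun n : ℕ => c ^ n * |u|) atTop (𝓝 0) := by
    simpa using (tendsto_pow_atTop_nhds_zero_of_lt_one hc0 hc1).mul_const |u|
  obtain ⟨n, hn⟩ := (hlim.eventually_lt_const hδ).exists
  exact hiter n s u hs hn

lemma nonpos_of_le_sum_comp_mul {S : Type*} [Fintype S] {p : S → Prop} {w : S → S → ℝ}
    {g : S → ℝ → ℝ} (hclosed : ∀ s t, p s → w s t ≠ 0 → p t) (hw : ∀ s t, p s → |w s t| < 1)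
    (hrow : ∀ s, ∑ t, w s t ^ 2 ≤ 1) (hg : ∀ s, g s =o[𝓝 0] fun u => u ^ 2)
    (hle : ∀ s u, g s u ≤ ∑ t, g t (w s t * u)) {s : S} (hs : p s) (u : ℝ) : g s u ≤ 0 := by
  obtain ⟨c, hc, hc0, hc1⟩ : ∃ c : ℝ, (∀ s t, p s → |w s t| ≤ c) ∧ 0 < c ∧ c < 1 := by
    have hev : ∀ᶠ c in 𝓝[<] (1 : ℝ), ∀ s t, p s → |w s t| ≤ c := by
      simp only [eventually_all]
      exact fun s t hs => mem_of_superset (Ioo_mem_nhdsLT (hw s t hs)) fun _ h => h.1.le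
    exact (hev.and (Ioo_mem_nhdsLT one_pos)).exists
  have hquad : ∀ η > 0, g s u ≤ η * u ^ 2 := by
    intro η hη
    obtain ⟨δ, hδ, hball⟩ := Metric.eventually_nhds_iff.1
      (eventually_all.2 fun s => (hg s).def hη)
    refine le_mul_sq_of_le_sum_comp_mul hc0.le hc1 hδ hη.le hclosed hc hrow (fun s u hu => ?_)
      hle hs u
    simpa using (le_abs_self _).trans (hball (y := u) (by simpa using hu) s)
  have hlim : Tendsto (fun η : ℝ => η * u ^ 2) (𝓝[>] 0) (𝓝 0) := by
    simpa using ((continuous_mul_const (u ^ 2)).tendsto (0 : ℝ)).mono_left nhdsWithin_le_nhds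
  exact ge_of_tendsto hlim (eventually_nhdsWithin_of_forall hquad)

lemma eq_zero_of_sum_sq_eq_one {S : Type*} [Fintype S] {w : S → ℝ} (hw : ∑ t, w t ^ 2 = 1)
    {s t : S} (hs : |w s| = 1) (ht : t ≠ s) : w t = 0 := by
  classical
  have hsplit := Fintype.sum_eq_add_sum_compl s fun t => w t ^ 2
  rw [hw, ← sq_abs (w s), hs, one_pow, left_eq_add,
    Finset.sum_eq_zero_iff_of_nonneg fun _ _ => sq_nonneg _] at hsplit
  exact sq_eq_zero_iff.1 (hsplit t (by simpa using ht))

/-- A row without an entry `±1` is coupled only to rows of the same kind, and on these the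
asymmetries satisfy a contracting inequality. -/
lemma exists_abs_eq_one_of_charFun_eq_prod {S : Type*} [Fintype S] {W : Matrix S S ℝ}
    (hW : W.IsSymm) (hrow : ∀ s, ∑ t, W s t ^ 2 = 1) {ν : S → Measure ℝ}
    [∀ s, IsProbabilityMeasure (ν s)] (hν : ∀ s, IsStandardized (ν s))
    (hprod : ∀ s u, charFun (ν s) u = ∏ t, charFun (ν t) (W s t * u))
    {s : S} (hs : ν s ≠ (ν s).map fun t => -t) : ∃ t, |W s t| = 1 := by
  have hle_one : ∀ s t, |W s t| ≤ 1 := fun s t => by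
    rw [← sq_le_one_iff_abs_le_one, ← hrow s]
    exact Finset.single_le_sum (f := fun t => W s t ^ 2) (fun _ _ => sq_nonneg _)
      (Finset.mem_univ t)
  have hclosed : ∀ s t, (∀ r, |W s r| ≠ 1) → W s t ≠ 0 → ∀ r, |W t r| ≠ 1 := by
    intro s t hs hst r hr
    obtain rfl | hsr := eq_or_ne s r
    · exact hs t (hW.apply s t ▸ hr)
    · exact hst (hW.apply s t ▸ eq_zero_of_sum_sq_eq_one (hrow t) hr hsr)
  by_contra! hbad
  refine hs (eq_map_neg_of_charFunAsymm_eq_zero fun u => le_antisymm ?_ (norm_nonneg _))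
  exact nonpos_of_le_sum_comp_mul hclosed (fun s t h => (hle_one s t).lt_of_ne (h t))
    (fun s => (hrow s).le) (fun s => (hν s).charFunAsymm_isLittleO)
    (fun s => charFunAsymm_le_sum (hprod s)) hbad u

end Contraction

section MatrixAlgebra

lemma linearIndependent_col_of_rank_eq_card {V S K : Type*} [Field K] [Fintype S]
    {M : Matrix V S K} (h : M.rank = Fintype.card S) : LinearIndependent K M.col := by
  rw [linearIndependent_iff_card_eq_finrank_span, ← h, M.rank_eq_finrank_span_cols, Set.finrank]

lemma exists_left_inverse_of_linearIndependent_col {V S K : Type*} [Field K] [Fintype V]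
    [Finite S] [DecidableEq S] {M : Matrix V S K} (h : LinearIndependent K M.col) :
    ∃ C : Matrix S V K, C * M = 1 := by
  have := Fintype.ofFinite S
  rw [← Matrix.vecMul_surjective_iff_exists_left_inverse]
  have hrange : LinearMap.range Mᵀ.mulVecLin = ⊤ := by
    refine Submodule.eq_top_of_finrank_eq ?_
    rw [Module.finrank_pi, ← LinearIndependent.rank_matrix (M := Mᵀ) h, Matrix.rank]
  intro y
  obtain ⟨x, hx⟩ := LinearMap.range_eq_top.1 hrange y
  exact ⟨x, (Matrix.mulVec_transpose M x).symm.trans hx⟩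

lemma exists_orthogonal_of_mul_transpose_eq {V S T R : Type*} [CommRing R] [Fintype V]
    [Fintype S] [Fintype T] [DecidableEq S] [DecidableEq T] {M : Matrix V S R} {N : Matrix V T R}
    {C : Matrix S V R} {D : Matrix T V R} (hC : C * M = 1) (hD : D * N = 1)
    (h : M * Mᵀ = N * Nᵀ) : ∃ Q : Matrix S T R, Q * Qᵀ = 1 ∧ Qᵀ * Q = 1 ∧ N = M * Q := by
  have hC' : Mᵀ * Cᵀ = 1 := by rw [← Matrix.transpose_mul, hC, Matrix.transpose_one]
  have hD' : Nᵀ * Dᵀ = 1 := by rw [← Matrix.transpose_mul, hD, Matrix.transpose_one]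
  have hN : N = M * (Mᵀ * Dᵀ) := by
    rw [← Matrix.mul_assoc, h, Matrix.mul_assoc, hD', Matrix.mul_one]
  have hQ : C * N = Mᵀ * Dᵀ := by
    rw [hN, ← Matrix.mul_assoc, hC, Matrix.one_mul]
  refine ⟨Mᵀ * Dᵀ, ?_, ?_, hN⟩
  · calc Mᵀ * Dᵀ * (Mᵀ * Dᵀ)ᵀ = C * N * (C * N)ᵀ := by rw [hQ]
      _ = C * (N * Nᵀ) * Cᵀ := by simp only [Matrix.transpose_mul, Matrix.mul_assoc]
      _ = C * M * (Mᵀ * Cᵀ) := by rw [← h]; simp only [Matrix.mul_assoc]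
      _ = 1 := by rw [hC, hC', Matrix.one_mul]
  · calc (Mᵀ * Dᵀ)ᵀ * (Mᵀ * Dᵀ) = D * (M * Mᵀ) * Dᵀ := by
          simp only [Matrix.transpose_mul, Matrix.transpose_transpose, Matrix.mul_assoc]
      _ = D * N * (Nᵀ * Dᵀ) := by rw [h]; simp only [Matrix.mul_assoc]
      _ = 1 := by rw [hD, hD', Matrix.one_mul]

lemma sum_sq_row_eq_one_of_mul_transpose_eq_one {S T R : Type*} [CommRing R] [Fintype T]
    [DecidableEq S] {Q : Matrix S T R} (hQ : Q * Qᵀ = 1) (i : S) : ∑ j, Q i j ^ 2 = 1 := by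
  simpa [Matrix.mul_apply, sq] using congrFun₂ hQ i i

/-- A block-diagonal matrix commutes with the diagonal indicator of a block, hence so does its
inverse. -/
lemma inv_apply_eq_zero_of_block_ne {H β R : Type*} [CommRing R] [Fintype H] [DecidableEq H]
    {M : Matrix H H R} {blk : H → β} (hM : ∀ h k, blk h ≠ blk k → M h k = 0) {h k : H}
    (hhk : blk h ≠ blk k) : M⁻¹ h k = 0 := by
  classical
  have hcomm : Commute (Matrix.diagonal fun l => if blk l = blk h then (1 : R) else 0) M := by
    ext i j
    rw [Matrix.diagonal_mul, Matrix.mul_diagonal]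
    by_cases hij : blk i = blk j
    · rw [hij, mul_comm]
    · rw [hM i j hij, mul_zero, zero_mul]
  have hinv := congrFun₂ (Matrix.Commute.zpow_right hcomm (-1)) h k
  rw [Matrix.zpow_neg_one, Matrix.diagonal_mul, Matrix.mul_diagonal] at hinv
  simpa [hhk.symm] using hinv

end MatrixAlgebra

section ProductMeasure

lemma charFun_map_dotProduct_pi {H : Type*} [Fintype H] (μ : H → Measure ℝ)
    [∀ k, IsProbabilityMeasure (μ k)] (c : H → ℝ) (u : ℝ) :
    charFun ((Measure.pi μ).map fun x => c ⬝ᵥ x) u = ∏ k, charFun (μ k) (c k * u) := by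
  have hprob : ∀ k, IsProbabilityMeasure ((μ k).map fun t => c k * t) := fun k =>
    Measure.isProbabilityMeasure_map (by fun_prop)
  have hscale := Measure.pi_map_pi (μ := μ) (f := fun k t => c k * t) fun k => by fun_prop
  have hsum := charFun_map_sum_pi_eq_prod fun k => (μ k).map fun t => c k * t
  rw [← hscale, Measure.map_map (by fun_prop) (by fun_prop)] at hsum
  refine (congrFun hsum u).trans ?_
  rw [Finset.prod_apply]
  exact Finset.prod_congr rfl fun k _ => charFun_map_mul (c k) u

lemma IsStandardized.memLp {μ : Measure ℝ} (hμ : IsStandardized μ) : MemLp id 2 μ :=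
  (memLp_two_iff_integrable_sq aestronglyMeasurable_id).2
    (.of_integral_ne_zero (by simp [hμ.integral_sq]))

lemma IsStandardized.variance {μ : Measure ℝ} (hμ : IsStandardized μ) :
    Var[id; μ] = 1 := by
  rw [variance_of_integral_eq_zero aemeasurable_id hμ.integral_id]
  exact hμ.integral_sq

variable {V H : Type*} [Fintype H] {μ : H → Measure ℝ} [∀ k, IsProbabilityMeasure (μ k)]

lemma memLp_eval_pi (hμ : ∀ k, IsStandardized (μ k)) (k : H) :
    MemLp (fun x : H → ℝ => x k) 2 (Measure.pi μ) :=
  (hμ k).memLp.comp_measurePreserving (measurePreserving_eval μ k)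

lemma covariance_eval_pi [DecidableEq H] (hμ : ∀ k, IsStandardized (μ k)) (k l : H) :
    cov[fun x => x k, fun x => x l; Measure.pi μ] = (1 : Matrix H H ℝ) k l := by
  obtain rfl | hkl := eq_or_ne k l
  · have heval := measurePreserving_eval μ k
    rw [covariance_self (measurable_pi_apply k).aemeasurable, Matrix.one_apply_eq,
      ← (hμ k).variance, ← heval.map_eq, variance_map aemeasurable_id heval.aemeasurable]
    rfl
  · rw [Matrix.one_apply_ne hkl]
    have hindep := iIndepFun_pi (μ := μ) (X := fun _ t => t) fun _ => by fun_prop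
    exact (hindep.indepFun hkl).covariance_eq_zero (memLp_eval_pi hμ k) (memLp_eval_pi hμ l)

lemma covariance_mulVec_pi (hμ : ∀ k, IsStandardized (μ k)) (M : Matrix V H ℝ) (v w : V) :
    cov[fun x => (M *ᵥ x) v, fun x => (M *ᵥ x) w; Measure.pi μ] = (M * Mᵀ) v w := by
  classical
  have hL : ∀ v k, MemLp (fun x : H → ℝ => M v k * x k) 2 (Measure.pi μ) := fun v k =>
    (memLp_eval_pi hμ k).const_mul (M v k)
  simp only [Matrix.mulVec, dotProduct]
  rw [covariance_fun_sum_fun_sum (hL v) (hL w)]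
  simp only [covariance_const_mul_left, covariance_const_mul_right, covariance_eval_pi hμ,
    Matrix.one_apply, Matrix.mul_apply, Matrix.transpose_apply, mul_ite, mul_one, mul_zero,
    Finset.sum_ite_eq, Finset.mem_univ, if_true]
  exact Finset.sum_congr rfl fun k _ => mul_comm _ _

lemma measurable_mulVec (M : Matrix V H ℝ) : Measurable fun x : H → ℝ => M *ᵥ x := by
  refine measurable_pi_lambda _ fun v => ?_
  simp only [Matrix.mulVec, dotProduct]
  fun_prop

lemma mul_transpose_eq_of_map_mulVec_eq {T : Type*} [Fintype T] {ν : T → Measure ℝ}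
    [∀ k, IsProbabilityMeasure (ν k)] (hμ : ∀ k, IsStandardized (μ k))
    (hν : ∀ k, IsStandardized (ν k)) {M : Matrix V H ℝ} {N : Matrix V T ℝ}
    (h : (Measure.pi μ).map (M *ᵥ ·) = (Measure.pi ν).map (N *ᵥ ·)) : M * Mᵀ = N * Nᵀ := by
  ext v w
  have hmap := congrArg (fun ρ => cov[fun y => y v, fun y => y w; ρ]) h
  have hmeas : ∀ v (ρ : Measure (V → ℝ)), AEStronglyMeasurable (fun y => y v) ρ := fun v ρ =>
    (measurable_pi_apply v).aestronglyMeasurable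
  rw [covariance_map_fun (hmeas v _) (hmeas w _) (measurable_mulVec M).aemeasurable,
    covariance_map_fun (hmeas v _) (hmeas w _) (measurable_mulVec N).aemeasurable] at hmap
  rwa [← covariance_mulVec_pi hμ M v w, ← covariance_mulVec_pi hν N v w]

lemma charFun_eq_prod_of_pi_eq_map_mulVec {T : Type*} [Fintype T] {ν : T → Measure ℝ}
    [∀ k, IsProbabilityMeasure (ν k)] {Q : Matrix H T ℝ}
    (h : Measure.pi μ = (Measure.pi ν).map (Q *ᵥ ·)) (k : H) (u : ℝ) :
    charFun (μ k) u = ∏ l, charFun (ν l) (Q k l * u) := by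
  rw [← charFun_map_dotProduct_pi, ← (measurePreserving_eval μ k).map_eq, h,
    Measure.map_map (by fun_prop) (measurable_mulVec Q)]
  rfl

lemma eq_map_mulVec_of_map_mulVec_eq {S T : Type*} [Fintype V] [Fintype S] [Fintype T]
    [DecidableEq S] {P : Measure (S → ℝ)} {P' : Measure (T → ℝ)} {M : Matrix V S ℝ}
    {C : Matrix S V ℝ} {Q : Matrix S T ℝ} (hC : C * M = 1)
    (h : P.map (M *ᵥ ·) = P'.map ((M * Q) *ᵥ ·)) : P = P'.map (Q *ᵥ ·) := by
  have hmap := congrArg (Measure.map (C *ᵥ ·)) h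
  rw [Measure.map_map (measurable_mulVec C) (measurable_mulVec M),
    Measure.map_map (measurable_mulVec C) (measurable_mulVec _)] at hmap
  simpa only [Function.comp_def, Matrix.mulVec_mulVec, ← Matrix.mul_assoc, hC, Matrix.one_mul,
    Matrix.one_mulVec, Measure.map_id'] using hmap

lemma pi_map_restrict (s : Set H) [Fintype s] :
    (Measure.pi μ).map (fun x (k : s) => x k) = Measure.pi fun k : s => μ k := by
  rw [← Measure.infinitePi_eq_pi, ← Measure.infinitePi_eq_pi]
  exact Measure.infinitePi_map_restrict' μ

lemma map_mulVec_pi_eq_of_eq_zero {M : Matrix V H ℝ} {s : Set H} [Fintype s]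
    (hM : ∀ v, ∀ k ∉ s, M v k = 0) :
    (Measure.pi μ).map (M *ᵥ ·)
      = (Measure.pi fun k : s => μ k).map (M.submatrix id (Subtype.val : s → H) *ᵥ ·) := by
  classical
  rw [← pi_map_restrict s, Measure.map_map (measurable_mulVec _) (by fun_prop)]
  congr 1 with x v
  simp only [Function.comp_apply, Matrix.mulVec, dotProduct, Matrix.submatrix_apply, id_eq]
  rw [← Fintype.sum_subtype_add_sum_subtype (· ∈ s), add_eq_left.2]
  · congr!
  · exact Finset.sum_eq_zero fun k _ => by rw [hM v k k.2, zero_mul]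

end ProductMeasure

section SignedCopy

/-- `ν` is the law of a variable with law `μ` multiplied by the sign `ε`. -/
def IsSignedCopy (ε : ℝ) (μ ν : Measure ℝ) : Prop :=
  (ε = 1 ∨ ε = -1) ∧ ν = μ.map fun t => ε * t

lemma IsSignedCopy.mul_self {ε : ℝ} {μ ν : Measure ℝ} (h : IsSignedCopy ε μ ν) : ε * ε = 1 :=
  mul_self_eq_one_iff.2 h.1

lemma IsSignedCopy.symm {ε : ℝ} {μ ν : Measure ℝ} (h : IsSignedCopy ε μ ν) :
    IsSignedCopy ε ν μ := by
  refine ⟨h.1, ?_⟩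
  rw [h.2, Measure.map_map (by fun_prop) (by fun_prop)]
  simp [Function.comp_def, ← mul_assoc, h.mul_self]

lemma IsSignedCopy.trans {ε δ : ℝ} {μ ν ρ : Measure ℝ} (h : IsSignedCopy ε μ ν)
    (h' : IsSignedCopy δ ν ρ) : IsSignedCopy (δ * ε) μ ρ := by
  refine ⟨mul_self_eq_one_iff.1 ?_, ?_⟩
  · rw [mul_mul_mul_comm, h.mul_self, h'.mul_self, one_mul]
  · rw [h'.2, h.2, Measure.map_map (by fun_prop) (by fun_prop)]
    simp [Function.comp_def, mul_assoc]

lemma IsSignedCopy.eq_or_eq_map_neg {ε : ℝ} {μ ν : Measure ℝ} (h : IsSignedCopy ε μ ν) :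
    ν = μ ∨ ν = μ.map fun t => -t := by
  obtain ⟨rfl | rfl, hν⟩ := h
  · exact .inl (by simpa using hν)
  · exact .inr (by simpa using hν)

lemma IsSignedCopy.sign_unique {ε δ : ℝ} {μ ν : Measure ℝ} (hν : ν ≠ ν.map fun t => -t)
    (h : IsSignedCopy ε μ ν) (h' : IsSignedCopy δ μ ν) : δ = ε := by
  have hself := h.symm.trans h'
  obtain hδε | hδε := hself.1
  · exact mul_right_cancel₀ (left_ne_zero_of_mul_eq_one h.mul_self) (hδε.trans h.mul_self.symm)
  · exact absurd (by simpa [hδε] using hself.2) hν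

end SignedCopy

section SingleMixture

variable {S T : Type*} [Fintype S] [Fintype T] {Q : Matrix S T ℝ} {μ : S → Measure ℝ}
  {ν : T → Measure ℝ} [∀ k, IsProbabilityMeasure (μ k)] [∀ k, IsProbabilityMeasure (ν k)]

/-- The symmetric matrix with off-diagonal blocks `Q` and `Qᵀ` relates the combined family of laws
to itself. -/
lemma exists_abs_eq_one_of_pi_eq_map_mulVec [DecidableEq S] [DecidableEq T] (hQ : Q * Qᵀ = 1)
    (hQ' : Qᵀ * Q = 1) (hμ : ∀ k, IsStandardized (μ k)) (hν : ∀ k, IsStandardized (ν k))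
    (h : Measure.pi μ = (Measure.pi ν).map (Q *ᵥ ·)) {i : S} (hi : μ i ≠ (μ i).map fun t => -t) :
    ∃ j, |Q i j| = 1 := by
  have h' : Measure.pi ν = (Measure.pi μ).map (Qᵀ *ᵥ ·) :=
    eq_map_mulVec_of_map_mulVec_eq hQ' (by simp only [hQ, Matrix.one_mulVec, Measure.map_id', h])
  have hsymm : (Matrix.fromBlocks 0 Q Qᵀ 0).IsSymm :=
    Matrix.IsSymm.fromBlocks Matrix.isSymm_zero rfl Matrix.isSymm_zero
  have hprob : ∀ s, IsProbabilityMeasure (Sum.elim μ ν s) := by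
    rintro (k | k) <;> dsimp only [Sum.elim_inl, Sum.elim_inr] <;> infer_instance
  obtain ⟨j | j, hj⟩ := exists_abs_eq_one_of_charFun_eq_prod (ν := Sum.elim μ ν) (s := .inl i)
    hsymm (by
      rintro (k | k)
      · simpa using sum_sq_row_eq_one_of_mul_transpose_eq_one hQ k
      · simpa using sum_sq_row_eq_one_of_mul_transpose_eq_one (Q := Qᵀ) hQ' k)
    (Sum.forall.2 ⟨hμ, hν⟩) (by
      rintro (k | k) u
      · simpa using charFun_eq_prod_of_pi_eq_map_mulVec h k u
      · simpa using charFun_eq_prod_of_pi_eq_map_mulVec h' k u) hi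
  · simp at hj
  · exact ⟨j, hj⟩

lemma isSignedCopy_of_pi_eq_map_mulVec (h : Measure.pi μ = (Measure.pi ν).map (Q *ᵥ ·)) {i : S}
    {j : T} (hj : |Q i j| = 1) (hzero : ∀ l ≠ j, Q i l = 0) :
    IsSignedCopy (Q i j) (μ i) (ν j) := by
  refine IsSignedCopy.symm ⟨eq_or_eq_neg_of_abs_eq hj, Measure.ext_of_charFun (funext fun u => ?_)⟩
  rw [charFun_eq_prod_of_pi_eq_map_mulVec h, charFun_map_mul]
  exact Fintype.prod_eq_single j fun l hl => by simp [hzero l hl]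

lemma exists_isSignedCopy_of_map_mulVec_eq {V : Type*} [Finite V] {M : Matrix V S ℝ}
    {N : Matrix V T ℝ} (hM : LinearIndependent ℝ M.col) (hN : LinearIndependent ℝ N.col)
    (hμ : ∀ k, IsStandardized (μ k)) (hν : ∀ k, IsStandardized (ν k))
    (h : (Measure.pi μ).map (M *ᵥ ·) = (Measure.pi ν).map (N *ᵥ ·)) {i : S}
    (hi : μ i ≠ (μ i).map fun t => -t) :
    ∃ j ε, IsSignedCopy ε (μ i) (ν j) ∧ ∀ v, N v j = ε * M v i := by
  classical
  have := Fintype.ofFinite V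
  obtain ⟨C, hC⟩ := exists_left_inverse_of_linearIndependent_col hM
  obtain ⟨D, hD⟩ := exists_left_inverse_of_linearIndependent_col hN
  obtain ⟨Q, hQ, hQ', rfl⟩ :=
    exists_orthogonal_of_mul_transpose_eq hC hD (mul_transpose_eq_of_map_mulVec_eq hμ hν h)
  have hpi := eq_map_mulVec_of_map_mulVec_eq hC h
  obtain ⟨j, hj⟩ := exists_abs_eq_one_of_pi_eq_map_mulVec hQ hQ' hμ hν hpi hi
  have hrow : ∀ l ≠ j, Q i l = 0 := fun l hl =>
    eq_zero_of_sum_sq_eq_one (sum_sq_row_eq_one_of_mul_transpose_eq_one hQ i) hj hl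
  have hcol : ∀ k ≠ i, Q k j = 0 := fun k hk =>
    eq_zero_of_sum_sq_eq_one (w := fun k => Q k j)
      (sum_sq_row_eq_one_of_mul_transpose_eq_one (Q := Qᵀ) hQ' j) hj hk
  refine ⟨j, Q i j, isSignedCopy_of_pi_eq_map_mulVec hpi hj hrow, fun v => ?_⟩
  rw [Matrix.mul_apply, mul_comm]
  exact Fintype.sum_eq_single i fun k hk => by rw [hcol k hk, mul_zero]

end SingleMixture

section SignedRelabelling

/-- The source laws of the model: standardized, non-symmetric and pairwise different up to sign. -/
structure IsSourceFamily {H : Type*} (μ : H → Measure ℝ) : Prop where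
  isStandardized : ∀ i, IsStandardized (μ i)
  ne_map_neg : ∀ i, μ i ≠ (μ i).map fun t => -t
  ne_and_ne_map_neg : ∀ i j, i ≠ j → μ i ≠ μ j ∧ μ i ≠ (μ j).map fun t => -t

lemma IsSourceFamily.eq_of_isSignedCopy {H : Type*} {μ : H → Measure ℝ} (hμ : IsSourceFamily μ)
    {ε : ℝ} {i j : H} (h : IsSignedCopy ε (μ i) (μ j)) : i = j := by
  by_contra hij
  have hne := hμ.ne_and_ne_map_neg j i (Ne.symm hij)
  exact h.eq_or_eq_map_neg.elim hne.1 hne.2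

variable {V H1 H2 : Type*} {μ1 : H1 → Measure ℝ} {μ2 : H2 → Measure ℝ}

lemma IsSourceFamily.exists_equiv_isSignedCopy_iff (h1 : IsSourceFamily μ1)
    (h2 : IsSourceFamily μ2) (hfwd : ∀ i, ∃ j ε, IsSignedCopy ε (μ1 i) (μ2 j))
    (hbwd : ∀ j, ∃ i ε, IsSignedCopy ε (μ2 j) (μ1 i)) :
    ∃ (φ : H1 ≃ H2) (ε : H1 → ℝ),
      ∀ i j δ, IsSignedCopy δ (μ1 i) (μ2 j) ↔ φ i = j ∧ ε i = δ := by
  choose f ε hf using hfwd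
  choose g δ hg using hbwd
  let φ : H1 ≃ H2 := ⟨f, g, fun i => (h1.eq_of_isSignedCopy ((hf i).trans (hg (f i)))).symm,
    fun j => (h2.eq_of_isSignedCopy ((hg j).trans (hf (g j)))).symm⟩
  refine ⟨φ, ε, fun i j δ => ⟨fun h => ?_, ?_⟩⟩
  · obtain rfl := h2.eq_of_isSignedCopy ((hf i).symm.trans h)
    exact ⟨rfl, h.sign_unique (h2.ne_map_neg _) (hf i)⟩
  · rintro ⟨rfl, rfl⟩
    exact hf i

variable [Fintype H1] [Fintype H2] {φ : H1 ≃ H2} {ε : H1 → ℝ}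

lemma pi_eq_map_signed_relabelling [∀ i, SigmaFinite (μ1 i)]
    [∀ j, SigmaFinite (μ2 j)] (h : ∀ i, μ2 (φ i) = (μ1 i).map fun t => ε i * t) :
    Measure.pi μ2
      = (Measure.pi μ1).map fun x (j : H2) => ε (φ.symm j) * x (φ.symm j) := by
  refine Measure.pi_eq fun s hs => ?_
  rw [Measure.map_apply (by fun_prop) (MeasurableSet.univ_pi hs)]
  have hpre : (fun (x : H1 → ℝ) (j : H2) => ε (φ.symm j) * x (φ.symm j)) ⁻¹' Set.univ.pi s
      = Set.univ.pi fun i => (fun t => ε i * t) ⁻¹' s (φ i) := by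
    ext x
    simp only [Set.mem_preimage, Set.mem_univ_pi]
    exact ⟨fun hx i => by simpa using hx (φ i), fun hx j => by simpa using hx (φ.symm j)⟩
  rw [hpre, Measure.pi_pi, ← φ.prod_comp]
  refine Finset.prod_congr rfl fun i _ => ?_
  rw [h, Measure.map_apply (by fun_prop) (hs _)]

lemma mulVec_signed_relabelling {B1 : Matrix V H1 ℝ} {B2 : Matrix V H2 ℝ}
    (hε : ∀ i, ε i * ε i = 1) (hB : ∀ v i, B2 v (φ i) = ε i * B1 v i) (x : H1 → ℝ) :
    (B2 *ᵥ fun j => ε (φ.symm j) * x (φ.symm j)) = B1 *ᵥ x := by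
  ext v
  simp only [Matrix.mulVec, dotProduct]
  rw [← φ.sum_comp]
  refine Finset.sum_congr rfl fun i _ => ?_
  rw [φ.symm_apply_apply, hB]
  linear_combination B1 v i * x i * hε i

end SignedRelabelling

section MultiDomain

/-- The block of `B` with rows the variables of domain `e` and columns the sources in `S e`. -/
abbrev domainBlock {ι V H : Type*} (dom : V → ι) (S : ι → Set H) (B : Matrix V H ℝ) (e : ι) :
    Matrix {v // dom v = e} (S e) ℝ :=
  B.submatrix Subtype.val Subtype.val

/-- The mixing matrix `B` of a multi-domain model in which domain `e` observes the variables `v`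
with `dom v = e` and depends on the sources in `S e`: its support respects `S`, every source is
seen by some domain, and in each domain the columns of the visible sources are independent. -/
structure IsMultiDomainMixing {ι V H : Type*} (dom : V → ι) (S : ι → Set H)
    (B : Matrix V H ℝ) : Prop where
  eq_zero : ∀ v, ∀ k ∉ S (dom v), B v k = 0
  exists_mem : ∀ k, ∃ e, k ∈ S e
  linearIndependent_col : ∀ e, LinearIndependent ℝ (domainBlock dom S B e).col

/-- The two models induce the same law of the observed variables in every domain. -/
def HaveSameDomainLaws {ι V H1 H2 : Type*} [Fintype H1] [Fintype H2] (dom : V → ι)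
    (B1 : Matrix V H1 ℝ) (B2 : Matrix V H2 ℝ) (μ1 : H1 → Measure ℝ) (μ2 : H2 → Measure ℝ) : Prop :=
  ∀ e, (Measure.pi μ1).map (fun x (v : {v // dom v = e}) => (B1 *ᵥ x) v)
    = (Measure.pi μ2).map fun x (v : {v // dom v = e}) => (B2 *ᵥ x) v

variable {ι V H1 H2 : Type*} [Fintype H1] [Fintype H2] {dom : V → ι}
  [∀ e, Finite {v // dom v = e}] {S1 : ι → Set H1} {S2 : ι → Set H2}
  {B1 : Matrix V H1 ℝ} {B2 : Matrix V H2 ℝ} {μ1 : H1 → Measure ℝ} {μ2 : H2 → Measure ℝ}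
  [∀ i, IsProbabilityMeasure (μ1 i)] [∀ j, IsProbabilityMeasure (μ2 j)]

lemma IsMultiDomainMixing.exists_isSignedCopy (hB1 : IsMultiDomainMixing dom S1 B1)
    (hB2 : IsMultiDomainMixing dom S2 B2) (h1 : ∀ i, IsStandardized (μ1 i))
    (h2 : ∀ j, IsStandardized (μ2 j)) (h : HaveSameDomainLaws dom B1 B2 μ1 μ2) {e : ι} {i : H1}
    (hi : i ∈ S1 e) (hneg : μ1 i ≠ (μ1 i).map fun t => -t) :
    ∃ j ∈ S2 e, ∃ ε, IsSignedCopy ε (μ1 i) (μ2 j) ∧ ∀ v, dom v = e → B2 v j = ε * B1 v i := by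
  classical
  have hvis : (Measure.pi fun k : S1 e => μ1 k).map (domainBlock dom S1 B1 e *ᵥ ·)
      = (Measure.pi fun k : S2 e => μ2 k).map (domainBlock dom S2 B2 e *ᵥ ·) := by
    have hleft := map_mulVec_pi_eq_of_eq_zero (μ := μ1) (s := S1 e)
      (M := B1.submatrix (Subtype.val : {v // dom v = e} → V) id)
      fun v k hk => hB1.eq_zero v k (v.2.symm ▸ hk)
    have hright := map_mulVec_pi_eq_of_eq_zero (μ := μ2) (s := S2 e)
      (M := B2.submatrix (Subtype.val : {v // dom v = e} → V) id)
      fun v k hk => hB2.eq_zero v k (v.2.symm ▸ hk)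
    exact hleft.symm.trans ((h e).trans hright)
  obtain ⟨j, ε, hcopy, hcol⟩ := exists_isSignedCopy_of_map_mulVec_eq
    (hB1.linearIndependent_col e) (hB2.linearIndependent_col e)
    (fun k => h1 k) (fun k => h2 k) hvis (i := ⟨i, hi⟩) hneg
  exact ⟨j, j.2, ε, hcopy, fun v hv => hcol ⟨v, hv⟩⟩

theorem IsMultiDomainMixing.exists_signed_relabelling (hB1 : IsMultiDomainMixing dom S1 B1)
    (hB2 : IsMultiDomainMixing dom S2 B2) (h1 : IsSourceFamily μ1) (h2 : IsSourceFamily μ2)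
    (h : HaveSameDomainLaws dom B1 B2 μ1 μ2) :
    ∃ (φ : H1 ≃ H2) (ε : H1 → ℝ), (∀ i, IsSignedCopy (ε i) (μ1 i) (μ2 (φ i))) ∧
      (∀ i e, φ i ∈ S2 e ↔ i ∈ S1 e) ∧ ∀ v i, B2 v (φ i) = ε i * B1 v i := by
  have hfwd := fun {e i} (hi : i ∈ S1 e) =>
    hB1.exists_isSignedCopy hB2 h1.isStandardized h2.isStandardized h hi (h1.ne_map_neg i)
  have hbwd := fun {e j} (hj : j ∈ S2 e) =>
    hB2.exists_isSignedCopy hB1 h2.isStandardized h1.isStandardized (fun e => (h e).symm) hj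
      (h2.ne_map_neg j)
  obtain ⟨φ, ε, hφ⟩ := h1.exists_equiv_isSignedCopy_iff h2
    (fun i => by
      obtain ⟨e, hi⟩ := hB1.exists_mem i
      obtain ⟨j, -, ε, hcopy, -⟩ := hfwd hi
      exact ⟨j, ε, hcopy⟩)
    (fun j => by
      obtain ⟨e, hj⟩ := hB2.exists_mem j
      obtain ⟨i, -, ε, hcopy, -⟩ := hbwd hj
      exact ⟨i, ε, hcopy⟩)
  have hmem : ∀ i e, φ i ∈ S2 e ↔ i ∈ S1 e := fun i e => by
    constructor <;> intro hi
    · obtain ⟨k, hk, δ, hcopy, -⟩ := hbwd hi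
      exact φ.injective ((hφ _ _ _).1 hcopy.symm).1 ▸ hk
    · obtain ⟨j, hj, δ, hcopy, -⟩ := hfwd hi
      exact ((hφ _ _ _).1 hcopy).1 ▸ hj
  refine ⟨φ, ε, fun i => (hφ _ _ _).2 ⟨rfl, rfl⟩, hmem, fun v i => ?_⟩
  by_cases hi : i ∈ S1 (dom v)
  · obtain ⟨j, -, δ, hcopy, hcol⟩ := hfwd hi
    obtain ⟨rfl, rfl⟩ := (hφ _ _ _).1 hcopy
    exact hcol v rfl
  · rw [hB1.eq_zero v i hi, hB2.eq_zero v _ (mt (hmem i _).1 hi), mul_zero]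

end MultiDomain

section Representation

/-- The sources `L ∪ I_e` seen by domain `e`, where `blk` sends the shared sources to `none` and
those specific to domain `e` to `some e`. -/
def visibleSet {ι H : Type*} (blk : H → Option ι) (e : ι) : Set H :=
  {k | blk k = none ∨ blk k = some e}

/-- The matrix part of a linear multi-domain representation: `B = G (1 - A)⁻¹`, where `A` holds the
causal weights among the latent sources and `G` their effects on the observed variables. -/
def IsMultiDomainRepresentation {ι V H : Type*} [Fintype H] [DecidableEq H] (dom : V → ι)
    (blk : H → Option ι) (B : Matrix V H ℝ) : Prop :=
  ∃ (G : Matrix V H ℝ) (A : Matrix H H ℝ), (∀ v, ∀ k ∉ visibleSet blk (dom v), G v k = 0) ∧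
    IsUnit (1 - A).det ∧ (∀ h k, blk h ≠ blk k → A h k = 0) ∧ B = G * (1 - A)⁻¹

variable {ι V H : Type*} {dom : V → ι} {blk : H → Option ι}

lemma forall_mem_visibleSet_iff [Nontrivial ι] {k : H} :
    (∀ e, k ∈ visibleSet blk e) ↔ blk k = none := by
  refine ⟨fun h => ?_, fun h e => .inl h⟩
  by_contra hne
  obtain ⟨a, b, hab⟩ := exists_pair_ne ι
  have hsome : ∀ e, blk k = some e := fun e => (h e).resolve_left hne
  exact hab (Option.some_injective ι ((hsome a).symm.trans (hsome b)))

lemma eq_of_forall_mem_visibleSet_iff [Nontrivial ι] {H' : Type*} {blk' : H' → Option ι} {k : H}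
    {k' : H'} (h : ∀ e, k ∈ visibleSet blk e ↔ k' ∈ visibleSet blk' e) : blk k = blk' k' := by
  have hnone : blk k = none ↔ blk' k' = none := by
    rw [← forall_mem_visibleSet_iff, ← forall_mem_visibleSet_iff, forall_congr' h]
  cases hk : blk k with
  | none => exact (hnone.1 hk).symm
  | some e =>
    exact (((h e).1 (.inr hk)).resolve_left fun hk' => by simp [hnone.2 hk'] at hk).symm

variable [Fintype H] [DecidableEq H] {B : Matrix V H ℝ}

lemma IsMultiDomainRepresentation.eq_zero (hB : IsMultiDomainRepresentation dom blk B) {v : V}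
    {k : H} (hk : k ∉ visibleSet blk (dom v)) : B v k = 0 := by
  obtain ⟨G, A, hG, -, hA, rfl⟩ := hB
  have hM : ∀ h k, blk h ≠ blk k → (1 - A) h k = 0 := fun h k hhk => by
    rw [Matrix.sub_apply, Matrix.one_apply_ne (ne_of_apply_ne blk hhk), hA h k hhk, sub_zero]
  rw [Matrix.mul_apply]
  refine Finset.sum_eq_zero fun h _ => ?_
  by_cases hh : h ∈ visibleSet blk (dom v)
  · have hhk : blk h ≠ blk k := fun heq => hk (heq ▸ hh : blk k = none ∨ blk k = some (dom v))
    rw [inv_apply_eq_zero_of_block_ne hM hhk, mul_zero]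
  · rw [hG v h hh, zero_mul]

lemma IsMultiDomainRepresentation.isMultiDomainMixing [Nonempty ι]
    (hB : IsMultiDomainRepresentation dom blk B)
    (hcol : ∀ e, LinearIndependent ℝ (domainBlock dom (visibleSet blk) B e).col) :
    IsMultiDomainMixing dom (visibleSet blk) B where
  eq_zero _ _ := hB.eq_zero
  exists_mem k := by
    cases hk : blk k with
    | none => exact ⟨Classical.arbitrary ι, .inl hk⟩
    | some e => exact ⟨e, .inr hk⟩
  linearIndependent_col := hcol

end Representation

theorem stmt0_general {ι V H1 H2 : Type*} [Nontrivial ι] [DecidableEq ι] [Fintype H1] [Fintype H2]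
    [DecidableEq H1] [DecidableEq H2] {dom : V → ι} [∀ e, Finite {v // dom v = e}]
    {blk1 : H1 → Option ι} {blk2 : H2 → Option ι} {B1 : Matrix V H1 ℝ} {B2 : Matrix V H2 ℝ}
    {μ1 : H1 → Measure ℝ} {μ2 : H2 → Measure ℝ}
    [∀ i, IsProbabilityMeasure (μ1 i)] [∀ i, IsProbabilityMeasure (μ2 i)]
    (hrep1 : IsMultiDomainRepresentation dom blk1 B1)
    (hrep2 : IsMultiDomainRepresentation dom blk2 B2)
    (hμ1 : IsSourceFamily μ1) (hμ2 : IsSourceFamily μ2)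
    (hcol1 : ∀ e, LinearIndependent ℝ (domainBlock dom (visibleSet blk1) B1 e).col)
    (hcol2 : ∀ e, LinearIndependent ℝ (domainBlock dom (visibleSet blk2) B2 e).col)
    (hmarg : HaveSameDomainLaws dom B1 B2 μ1 μ2) :
    Fintype.card {k // blk1 k = none} = Fintype.card {k // blk2 k = none} ∧
    (∀ e, Fintype.card {k // blk1 k = some e} = Fintype.card {k // blk2 k = some e}) ∧
    ∃ (φ : H1 ≃ H2) (ε : H1 → ℝ),
      (∀ i, ε i = 1 ∨ ε i = -1) ∧
      (∀ i, blk2 (φ i) = blk1 i) ∧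
      (∀ v i, B2 v (φ i) = ε i * B1 v i) ∧
      Measure.pi μ2
        = (Measure.pi μ1).map (fun x (j : H2) => ε (φ.symm j) * x (φ.symm j)) ∧
      (Measure.pi μ1).map (B1 *ᵥ ·) = (Measure.pi μ2).map (B2 *ᵥ ·) := by
  obtain ⟨φ, ε, hcopy, hmem, hB⟩ := (hrep1.isMultiDomainMixing hcol1).exists_signed_relabelling
    (hrep2.isMultiDomainMixing hcol2) hμ1 hμ2 hmarg
  have hblk : ∀ i, blk2 (φ i) = blk1 i := fun i => eq_of_forall_mem_visibleSet_iff (hmem i)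
  have hcard : ∀ a, Fintype.card {k // blk1 k = a} = Fintype.card {k // blk2 k = a} := fun a =>
    Fintype.card_congr (φ.subtypeEquiv fun i => by rw [hblk])
  have hpi := pi_eq_map_signed_relabelling fun i => (hcopy i).2
  refine ⟨hcard none, fun e => hcard (some e), φ, ε, fun i => (hcopy i).1, hblk, hB, hpi, ?_⟩
  rw [hpi, Measure.map_map (measurable_mulVec B2) (by fun_prop)]
  simp only [Function.comp_def, mulVec_signed_relabelling (fun i => (hcopy i).mul_self) hB]

/-- **Identifiability of the joint distribution (Theorem 3.1), uniqueness form.**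
Observed variables are indexed by `V` with domain assignment `dom : V → Fin m`
(so `V_e = dom ⁻¹' {e}` are pairwise disjoint with union `V`).  For `r = 1,2`, the
latent index set `H_r` carries a block function `blk_r : H_r → Option (Fin m)`, with
`none` denoting the shared block `L` and `some e` the domain-specific block `I_e`;
`S_e = L ∪ I_e`.  A linear multi-domain representation is `B = G (1 - A)⁻¹` with
`G` supported on the allowed mixing pattern and `A` having no entries between
different latent blocks, together with a product probability measure. -/
theorem stmt0 {V H1 H2 : Type} [Fintype V] [Fintype H1] [Fintype H2]
    [DecidableEq V] [DecidableEq H1] [DecidableEq H2]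
    (m : ℕ) (hm : 2 ≤ m) (dom : V → Fin m)
    (blk1 : H1 → Option (Fin m)) (blk2 : H2 → Option (Fin m))
    (B1 : Matrix V H1 ℝ) (B2 : Matrix V H2 ℝ)
    (μ1 : H1 → Measure ℝ) (μ2 : H2 → Measure ℝ)
    [∀ i, IsProbabilityMeasure (μ1 i)] [∀ i, IsProbabilityMeasure (μ2 i)]
    -- (B1, ⨂ μ1) is a linear multi-domain representation
    (hrep1 : ∃ (G : Matrix V H1 ℝ) (A : Matrix H1 H1 ℝ),
      (∀ v k, ¬ (blk1 k = none ∨ blk1 k = some (dom v)) → G v k = 0) ∧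
      IsUnit (1 - A).det ∧
      (∀ h k, blk1 h ≠ blk1 k → A h k = 0) ∧
      B1 = G * (1 - A)⁻¹)
    -- (B2, ⨂ μ2) is a linear multi-domain representation
    (hrep2 : ∃ (G : Matrix V H2 ℝ) (A : Matrix H2 H2 ℝ),
      (∀ v k, ¬ (blk2 k = none ∨ blk2 k = some (dom v)) → G v k = 0) ∧
      IsUnit (1 - A).det ∧
      (∀ h k, blk2 h ≠ blk2 k → A h k = 0) ∧
      B2 = G * (1 - A)⁻¹)
    -- marginals: mean zero, unit variance, non-symmetric, pairwise different up to sign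
    (hmean1 : ∀ i, ∫ x, x ∂(μ1 i) = 0)
    (hvar1 : ∀ i, ∫ x, x ^ 2 ∂(μ1 i) = 1)
    (hnonsym1 : ∀ i, μ1 i ≠ Measure.map (fun t : ℝ => -t) (μ1 i))
    (hdiff1 : ∀ i j, i ≠ j → μ1 i ≠ μ1 j ∧ μ1 i ≠ Measure.map (fun t : ℝ => -t) (μ1 j))
    (hmean2 : ∀ i, ∫ x, x ∂(μ2 i) = 0)
    (hvar2 : ∀ i, ∫ x, x ^ 2 ∂(μ2 i) = 1)
    (hnonsym2 : ∀ i, μ2 i ≠ Measure.map (fun t : ℝ => -t) (μ2 i))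
    (hdiff2 : ∀ i j, i ≠ j → μ2 i ≠ μ2 j ∧ μ2 i ≠ Measure.map (fun t : ℝ => -t) (μ2 j))
    -- full column rank of B_{V_e, S_e} in every domain
    (hrank1 : ∀ e : Fin m,
      (B1.submatrix (Subtype.val : {v // dom v = e} → V)
          (Subtype.val : {k // blk1 k = none ∨ blk1 k = some e} → H1)).rank
        = Fintype.card {k // blk1 k = none ∨ blk1 k = some e})
    (hrank2 : ∀ e : Fin m,
      (B2.submatrix (Subtype.val : {v // dom v = e} → V)
          (Subtype.val : {k // blk2 k = none ∨ blk2 k = some e} → H2)).rank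
        = Fintype.card {k // blk2 k = none ∨ blk2 k = some e})
    -- equal domain marginals
    (hmarg : ∀ e : Fin m,
      Measure.map (fun x (v : {v // dom v = e}) => B1.mulVec x v.val) (Measure.pi μ1)
        = Measure.map (fun x (v : {v // dom v = e}) => B2.mulVec x v.val) (Measure.pi μ2)) :
    -- conclusion: blocks have equal sizes and B2 = B1 Ψ, P2 = Ψᵀ # P1 for a block
    -- signed permutation Ψ (encoded by a block-preserving bijection φ and signs ε);
    -- in particular the joint distributions coincide
    Fintype.card {k : H1 // blk1 k = none} = Fintype.card {k : H2 // blk2 k = none} ∧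
    (∀ e : Fin m, Fintype.card {k : H1 // blk1 k = some e}
        = Fintype.card {k : H2 // blk2 k = some e}) ∧
    ∃ (φ : H1 ≃ H2) (ε : H1 → ℝ),
      (∀ i, ε i = 1 ∨ ε i = -1) ∧
      (∀ i, blk2 (φ i) = blk1 i) ∧
      (∀ v i, B2 v (φ i) = ε i * B1 v i) ∧
      Measure.pi μ2
        = Measure.map (fun x (j : H2) => ε (φ.symm j) * x (φ.symm j)) (Measure.pi μ1) ∧
      Measure.map (fun x => B1.mulVec x) (Measure.pi μ1)
        = Measure.map (fun x => B2.mulVec x) (Measure.pi μ2) := by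
  have : Nontrivial (Fin m) := Fin.nontrivial_iff_two_le.2 hm
  have hcol1 := fun e => linearIndependent_col_of_rank_eq_card (hrank1 e)
  have hcol2 := fun e => linearIndependent_col_of_rank_eq_card (hrank2 e)
  exact stmt0_general hrep1 hrep2 ⟨fun i => ⟨hmean1 i, hvar1 i⟩, hnonsym1, hdiff1⟩
    ⟨fun i => ⟨hmean2 i, hvar2 i⟩, hnonsym2, hdiff2⟩ hcol1 hcol2 hmarg
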